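/- Consider the Abel differential equation dr/dθ = Ã₁(θ) r² + Ã₂(θ) r³, where Ã₁ and Ã₂ are continuous 2π-periodic real functions. If there exists a continuously differentiable 2π-periodic function u : ℝ → ℝ and continuous functions Â₁, Â₂ : ℝ → ℝ such that Ã₁(θ) = u'(θ) Â₁(u(θ)) and Ã₂(θ) = u'(θ) Â₂(u(θ)) for all θ, then the equation has a center at r = 0, i.e. every solution r(θ) with |r(0)| sufficiently small is defined on [0, 2π] and satisfies r(2π) = r(0). -/

import Mathlib

open Real

/-- A 2π-periodic scalar ODE `dr/dθ = F θ r` has a center at `r = 0` if every solution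
with `|r 0|` sufficiently small is defined on `[0, 2π]` and satisfies `r (2π) = r 0`. -/
def HasCenterAtZero (F : ℝ → ℝ → ℝ) : Prop :=
  ∃ ε > (0 : ℝ), ∀ r : ℝ → ℝ, |r 0| < ε →
    (∀ θ ∈ Set.Icc (0 : ℝ) (2 * Real.pi), HasDerivAt r (F θ (r θ)) θ) →
    r (2 * Real.pi) = r 0

/-! Under the substitution `v = u θ` the equation `dr/dθ = u'(θ) G(u(θ), r)` becomes
`dR/dv = G(v, R)`; for the Abel equation `G(v, R) = Â₁(v) R² + Â₂(v) R³`. As `G` and `∂G/∂R` vanish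
at `R = 0`, solutions `R` with small initial value exist on the whole compact range of `u`. Then
`R ∘ u` solves the original equation and takes equal values at `0` and `2π` because `u` does; by
uniqueness there is no other solution. -/

open Set Metric Topology
open scoped NNReal

section ParametricLipschitz

variable {X 𝕜 E : Type*} [TopologicalSpace X] [RCLike 𝕜] [NormedAddCommGroup E] [NormedSpace 𝕜 E]
  {f f' : X → 𝕜 → E} {S : Set X}

theorem exists_forall_lipschitzOnWith_of_isCompact {C : Set 𝕜} (hS : IsCompact S)
    (hC : IsCompact C) (hCconv : Convex ℝ C) (hf : ∀ p ∈ S, ∀ x ∈ C, HasDerivAt (f p) (f' p x) x)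
    (hf' : ContinuousOn f'.uncurry (S ×ˢ C)) :
    ∃ K : ℝ≥0, ∀ p ∈ S, LipschitzOnWith K (f p) C := by
  obtain ⟨M, hM⟩ := (hS.prod hC).exists_bound_of_continuousOn hf'
  refine ⟨M.toNNReal, fun p hp => ?_⟩
  exact hCconv.lipschitzOnWith_of_nnnorm_hasDerivWithin_le
    (fun x hx => (hf p hp x hx).hasDerivWithinAt)
    fun x hx => NNReal.le_toNNReal_of_coe_le (hM (p, x) ⟨hp, hx⟩)

theorem exists_forall_lipschitzOnWith_closedBall_of_deriv_eq_zero {x₀ : 𝕜}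
    (hS : IsCompact S) (hf : ∀ p ∈ S, ∀ x, HasDerivAt (f p) (f' p x) x)
    (hf' : Continuous f'.uncurry) (hf'₀ : ∀ p ∈ S, f' p x₀ = 0) {K : ℝ≥0} (hK : 0 < K) :
    ∃ a : ℝ≥0, 0 < a ∧ ∀ p ∈ S, LipschitzOnWith K (f p) (closedBall x₀ a) := by
  have hsmall : ∀ᶠ x in 𝓝 x₀, ∀ p ∈ S, ‖f' p x‖₊ < K := by
    refine hS.eventually_forall_of_forall_eventually fun p hp => ?_
    have hcont : Continuous fun z : 𝕜 × X => ‖f' z.2 z.1‖₊ := (hf'.comp continuous_swap).nnnorm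
    exact hcont.continuousAt.eventually_lt_const (by simpa [hf'₀ p hp] using hK)
  obtain ⟨a, ha, hball⟩ := nhds_basis_closedBall.eventually_iff.mp hsmall
  lift a to ℝ≥0 using ha.le
  refine ⟨a, mod_cast ha, fun p hp => ?_⟩
  exact (convex_closedBall x₀ _).lipschitzOnWith_of_nnnorm_hasDerivWithin_le
    (fun x _ => (hf p hp x).hasDerivWithinAt) fun x hx => (hball hx p hp).le

end ParametricLipschitz

theorem continuous_of_hasDerivAt_of_continuous_uncurry {X E : Type*} [TopologicalSpace X]
    [FirstCountableTopology X]
    [NormedAddCommGroup E] [NormedSpace ℝ E] [CompleteSpace E] {f f' : X → ℝ → E} {x₀ : ℝ}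
    (hf : ∀ p x, HasDerivAt (f p) (f' p x) x) (hf' : Continuous f'.uncurry)
    (hf₀ : Continuous fun p => f p x₀) (x : ℝ) : Continuous fun p => f p x := by
  have hint (p : X) : f p x = (∫ y in x₀..x, f' p y) + f p x₀ := by
    have hcont : Continuous (f' p) := hf'.comp (Continuous.prodMk_right p)
    rw [intervalIntegral.integral_eq_sub_of_hasDerivAt (fun y _ => hf p y)
      (hcont.intervalIntegrable _ _), sub_add_cancel]
  simp only [hint]
  exact (intervalIntegral.continuous_parametric_intervalIntegral_of_continuous hf'
    continuous_const).add hf₀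

section ODE

variable {E : Type*} [NormedAddCommGroup E] [NormedSpace ℝ E]

theorem eqOn_Icc_of_forall_lipschitzOnWith_closedBall {f : ℝ → E → E} {a b : ℝ} {r s : ℝ → E}
    (hf : ∀ M : ℝ, ∃ K : ℝ≥0, ∀ t ∈ Icc a b, LipschitzOnWith K (f t) (closedBall 0 M))
    (hr : ∀ t ∈ Icc a b, HasDerivWithinAt r (f t (r t)) (Icc a b) t)
    (hs : ∀ t ∈ Icc a b, HasDerivWithinAt s (f t (s t)) (Icc a b) t) (hrs : r a = s a) :
    EqOn r s (Icc a b) := by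
  have hr_cont : ContinuousOn r (Icc a b) := fun t ht => (hr t ht).continuousWithinAt
  have hs_cont : ContinuousOn s (Icc a b) := fun t ht => (hs t ht).continuousWithinAt
  obtain ⟨Mr, hMr⟩ := isCompact_Icc.exists_bound_of_continuousOn hr_cont
  obtain ⟨Ms, hMs⟩ := isCompact_Icc.exists_bound_of_continuousOn hs_cont
  obtain ⟨K, hK⟩ := hf (max Mr Ms)
  have hIco {t : ℝ} (ht : t ∈ Ico a b) : t ∈ Icc a b := Ico_subset_Icc_self ht
  exact ODE_solution_unique_of_mem_Icc_right (fun t ht => hK t (hIco ht)) hr_cont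
    (fun t ht => (hr t (hIco ht)).mono_of_mem_nhdsWithin (Icc_mem_nhdsGE_of_mem ht))
    (fun t ht => mem_closedBall_zero_iff.mpr ((hMr t (hIco ht)).trans (le_max_left _ _)))
    hs_cont
    (fun t ht => (hs t (hIco ht)).mono_of_mem_nhdsWithin (Icc_mem_nhdsGE_of_mem ht))
    (fun t ht => mem_closedBall_zero_iff.mpr ((hMs t (hIco ht)).trans (le_max_right _ _))) hrs

variable [CompleteSpace E]

theorem exists_hasDerivWithinAt_Icc_of_apply_zero {f : ℝ → E → E} {tmin tmax t₀ : ℝ}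
    (ht₀ : t₀ ∈ Icc tmin tmax) {K a : ℝ≥0} {ρ : E}
    (hlip : ∀ t ∈ Icc tmin tmax, LipschitzOnWith K (f t) (closedBall 0 a))
    (hcont : ∀ x ∈ closedBall 0 (a : ℝ), ContinuousOn (f · x) (Icc tmin tmax))
    (hzero : ∀ t ∈ Icc tmin tmax, f t 0 = 0) (hρ : K * a * (tmax - tmin) ≤ a - ‖ρ‖) :
    ∃ R : ℝ → E, R t₀ = ρ ∧
      ∀ t ∈ Icc tmin tmax, HasDerivWithinAt R (f t (R t)) (Icc tmin tmax) t := by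
  have hPL : IsPicardLindelof f ⟨t₀, ht₀⟩ 0 a ‖ρ‖₊ (K * a) K :=
    { lipschitzOnWith := hlip
      continuousOn := hcont
      norm_le := fun t ht x hx => by
        have hdist := (hlip t ht).dist_le_mul x hx 0 (mem_closedBall_self a.coe_nonneg)
        rw [hzero t ht, dist_zero_right, dist_zero_right] at hdist
        exact hdist.trans
          (mul_le_mul_of_nonneg_left (mem_closedBall_zero_iff.mp hx) K.coe_nonneg)
      mul_max_le := by
        refine le_trans ?_ hρ
        rw [NNReal.coe_mul]
        exact mul_le_mul_of_nonneg_left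
          (max_le (sub_le_sub_left ht₀.1 _) (sub_le_sub_right ht₀.2 _)) (by positivity) }
  exact hPL.exists_eq_forall_mem_Icc_hasDerivWithinAt (by simp)

theorem exists_closed_solution_of_comp {G : ℝ → E → E} {u u' : ℝ → ℝ} {a b : ℝ} (hab : a ≤ b)
    (hu : ∀ θ ∈ Icc a b, HasDerivWithinAt u (u' θ) (Icc a b) θ) (hclosed : u b = u a)
    (hcont : ∀ x, ContinuousOn (G · x) (u '' Icc a b)) (hzero : ∀ v ∈ u '' Icc a b, G v 0 = 0)
    (hlip : ∀ K : ℝ≥0, 0 < K → ∃ δ : ℝ≥0, 0 < δ ∧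
      ∀ v ∈ u '' Icc a b, LipschitzOnWith K (G v) (closedBall 0 δ)) :
    ∃ ε > (0 : ℝ), ∀ ρ : E, ‖ρ‖ < ε → ∃ s : ℝ → E, s a = ρ ∧ s b = ρ ∧
      ∀ θ ∈ Icc a b, HasDerivWithinAt s (u' θ • G (u θ) (s θ)) (Icc a b) θ := by
  have hu_cont : ContinuousOn u (Icc a b) := fun θ hθ => (hu θ hθ).continuousWithinAt
  have hmaps : MapsTo u (Icc a b) (u '' Icc a b) := mapsTo_image _ _
  have ha := hmaps (left_mem_Icc.mpr hab)
  obtain ⟨vmin, vmax, himage⟩ : ∃ vmin vmax, u '' Icc a b = Icc vmin vmax :=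
    ⟨_, _, hu_cont.image_Icc hab⟩
  rw [himage] at hmaps ha hcont hzero hlip
  obtain ⟨K, hK, hKlen⟩ : ∃ K : ℝ, 0 < K ∧ (vmax - vmin) * K < 1 / 2 :=
    exists_pos_mul_lt one_half_pos _
  lift K to ℝ≥0 using hK.le
  obtain ⟨δ, hδ, hδlip⟩ := hlip K (mod_cast hK)
  rw [← NNReal.coe_pos] at hδ
  refine ⟨δ / 2, by positivity, fun ρ hρ => ?_⟩
  obtain ⟨R, hRa, hR⟩ := exists_hasDerivWithinAt_Icc_of_apply_zero ha hδlip
    (fun x _ => hcont x) hzero (ρ := ρ) (by linarith [mul_lt_mul_of_pos_right hKlen hδ])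
  refine ⟨R ∘ u, hRa, ?_, fun θ hθ => ?_⟩
  · rw [Function.comp_apply, hclosed, hRa]
  · exact (hR (u θ) (hmaps hθ)).scomp θ (hu θ hθ) hmaps

end ODE

theorem abel_composition_condition_center_general
    (u du : ℝ → ℝ) (hu : ∀ θ, HasDerivAt u (du θ) θ) (hdu : Continuous du)
    (hup : Function.Periodic u (2 * Real.pi))
    (G dG : ℝ → ℝ → ℝ) (hG : ∀ v x, HasDerivAt (G v) (dG v x) x) (hdG : Continuous dG.uncurry)
    (hG0 : ∀ v, G v 0 = 0) (hdG0 : ∀ v, dG v 0 = 0) :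
    HasCenterAtZero (fun θ r => du θ * G (u θ) r) := by
  have hu_cont : Continuous u := continuous_iff_continuousAt.mpr fun θ => (hu θ).continuousAt
  have hG_cont (x : ℝ) : Continuous (G · x) :=
    continuous_of_hasDerivAt_of_continuous_uncurry (x₀ := 0) hG hdG
      (by simpa only [hG0] using continuous_const) x
  obtain ⟨ε, hε, hexists⟩ := exists_closed_solution_of_comp two_pi_pos.le
    (fun θ _ => (hu θ).hasDerivWithinAt) hup.eq (fun x => (hG_cont x).continuousOn)
    (fun v _ => hG0 v) fun K hK =>
      exists_forall_lipschitzOnWith_closedBall_of_deriv_eq_zero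
        (isCompact_Icc.image hu_cont) (fun v _ => hG v) hdG (fun v _ => hdG0 v) hK
  have hlip (M : ℝ) : ∃ K : ℝ≥0, ∀ θ ∈ Icc 0 (2 * π),
      LipschitzOnWith K (fun x => du θ * G (u θ) x) (closedBall 0 M) := by
    refine exists_forall_lipschitzOnWith_of_isCompact isCompact_Icc
      (isCompact_closedBall 0 M) (convex_closedBall 0 M)
      (fun θ _ x _ => (hG (u θ) x).const_mul (du θ)) ?_
    have hderiv_cont : Continuous fun z : ℝ × ℝ => du z.1 * dG.uncurry (u z.1, z.2) := by fun_prop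
    exact hderiv_cont.continuousOn
  refine ⟨ε, hε, fun r hr₀ hr => ?_⟩
  obtain ⟨s, hs₀, hs₁, hs⟩ := hexists (r 0) hr₀
  have hrs : EqOn r s (Icc 0 (2 * π)) := eqOn_Icc_of_forall_lipschitzOnWith_closedBall hlip
    (fun θ hθ => (hr θ hθ).hasDerivWithinAt) hs hs₀.symm
  exact (hrs (right_mem_Icc.mpr two_pi_pos.le)).trans hs₁

/-- If the Abel equation `dr/dθ = Ã₁(θ) r² + Ã₂(θ) r³`, with `Ã₁, Ã₂` continuous and
2π-periodic, satisfies the Composition Condition, then it has a center at `r = 0`. -/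
theorem abel_composition_condition_center
    (A1 A2 : ℝ → ℝ) (hA1c : Continuous A1) (hA2c : Continuous A2)
    (hA1p : Function.Periodic A1 (2 * Real.pi)) (hA2p : Function.Periodic A2 (2 * Real.pi))
    (u du : ℝ → ℝ) (hu : ∀ θ, HasDerivAt u (du θ) θ) (hdu : Continuous du)
    (hup : Function.Periodic u (2 * Real.pi))
    (Ah1 Ah2 : ℝ → ℝ) (hAh1 : Continuous Ah1) (hAh2 : Continuous Ah2)
    (h1 : ∀ θ, A1 θ = du θ * Ah1 (u θ)) (h2 : ∀ θ, A2 θ = du θ * Ah2 (u θ)) :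
    HasCenterAtZero (fun θ r => A1 θ * r ^ 2 + A2 θ * r ^ 3) := by
  have hG (v x : ℝ) : HasDerivAt (fun x => Ah1 v * x ^ 2 + Ah2 v * x ^ 3)
      (Ah1 v * (2 * x) + Ah2 v * (3 * x ^ 2)) x :=
    (((hasDerivAt_pow 2 x).const_mul _).add ((hasDerivAt_pow 3 x).const_mul _)).congr_deriv
      (by simp)
  have hcenter := abel_composition_condition_center_general u du hu hdu hup _ _ hG
    (by simp only [Function.uncurry_def]; fun_prop) (by simp) (by simp)
  simpa only [mul_add, ← mul_assoc, ← h1, ← h2] using hcenter
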